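/- For 0 ≤ i ≤ d: Ã*V_i ⊆ V_{i−1} + V_i + V_{i+1}, and A Ṽ*_i ⊆ Ṽ*_{i−1} + Ṽ*_i + Ṽ*_{i+1}. -/

import Mathlib

/-!
Write `p = q ^ 2` and `T = Ã*`. On the split decomposition, `A - q ^ (d - 2 i)` maps `W_i` into
`W_{i+1}` and `A* - θ*_i` maps `W_i` into `W_{i-1}`. Evaluating on each `W_i` gives the two
`q`-Weyl relations
`B A = p A B + (1 - p)` and `B T = p⁻¹ T B + (1 - p⁻¹)`.

For `v ∈ V_i` the first relation says that `(A - θ_{i-1}) B v` is a multiple of `v`, so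
`B v ∈ V_{i-1} + V_i`; since `T = c⁻¹ (A* - B)`, this gives the inclusion for `T V_i`.

For the other inclusion, the eigenvalues `θ*_i` satisfy
`θ*_i ² - (p + p⁻¹) θ*_i θ*_{i±1} + θ*_{i±1} ² = -c (p - p⁻¹) ²`, so `A*` and `A` satisfy a cubic
tridiagonal relation (`tridiag_relation`). Substituting `A* = B + c T` and using the two Weyl
relations, that relation turns into the `q`-Serre relation
`T³ A - [3] T² A T + [3] T A T² - A T³ = 0` with `[3] = p + 1 + p⁻¹` (`serre_identity`).
If `T v = y v`, this says `(T - y) (T - p y) (T - p⁻¹ y) A v = 0`, so `A v` lies in the sum of the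
eigenspaces of `T` for `y`, `p y`, `p⁻¹ y`, which are `Ṽ*_i`, `Ṽ*_{i-1}`, `Ṽ*_{i+1}`.
-/

/-- The cubic expression is homogeneous up to the `c`-correction: if `B` satisfies `q`-Weyl
relations with `A` and with `T` (parameter `p = q ^ 2`), the tridiagonal expression of the pair
`B + c T, A` is `c ^ 3` times the `q`-Serre expression of `T, A`. Both sides are compared after
moving every `B` to the right. -/
theorem serre_identity {𝕂 R : Type*} [Field 𝕂] [Ring R] [Algebra 𝕂 R] {p : 𝕂} (hp : p ≠ 0)
    (c : 𝕂) {A B T : R}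
    (hBA : B * A = p • (A * B) + (1 - p) • (1 : R))
    (hBT : B * T = p⁻¹ • (T * B) + (1 - p⁻¹) • (1 : R)) (X : R) (hX : X = B + c • T) :
    X * (X * (X * A)) - (p + 1 + p⁻¹) • (X * (X * (A * X))) + (p + 1 + p⁻¹) • (X * (A * (X * X)))
      - A * (X * (X * X)) + (c * (p - p⁻¹) ^ 2) • (X * A - A * X)
    = c ^ 3 • (T * (T * (T * A)) - (p + 1 + p⁻¹) • (T * (T * (A * T)))
      + (p + 1 + p⁻¹) • (T * (A * (T * T))) - A * (T * (T * T))) := by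
  subst hX
  have hBA' (Y : R) : B * (A * Y) = p • (A * (B * Y)) + (1 - p) • Y := by
    rw [← mul_assoc, hBA]; simp [add_mul, mul_assoc]
  have hBT' (Y : R) : B * (T * Y) = p⁻¹ • (T * (B * Y)) + (1 - p⁻¹) • Y := by
    rw [← mul_assoc, hBT]; simp [add_mul, mul_assoc]
  simp only [mul_add, add_mul, smul_mul_assoc, mul_smul_comm, hBA, hBA', hBT, hBT',
    smul_add, mul_one]
  match_scalars <;> field_simp <;> ring

/-- A vector with `(f - a) w` in the `b`-eigenspace, where `a ≠ b`; in particular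
`(f - b) (f - a) w = 0`. -/
theorem mem_two {𝕂 V : Type*} [Field 𝕂] [AddCommGroup V] [Module 𝕂 V] (f : Module.End 𝕂 V)
    {a b : 𝕂} (hab : a ≠ b) {w u : V} (h : f w = a • w + u) (hu : u ∈ f.eigenspace b) :
    w ∈ f.eigenspace a ⊔ f.eigenspace b := by
  have hab' := sub_ne_zero.2 hab.symm
  rw [Module.End.mem_eigenspace_iff] at hu
  refine Submodule.mem_sup.2 ⟨w - (b - a)⁻¹ • u, ?_, (b - a)⁻¹ • u, ?_, by abel⟩
  · rw [Module.End.mem_eigenspace_iff, map_sub, map_smul, hu, h]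
    match_scalars <;> (field_simp; try ring)
  · exact Submodule.smul_mem _ _ (by rwa [Module.End.mem_eigenspace_iff])

/-- The hypothesis is `(f - a) (f - b) (f - e) w = 0`, expanded. -/
theorem mem_three {𝕂 V : Type*} [Field 𝕂] [AddCommGroup V] [Module 𝕂 V] (f : Module.End 𝕂 V)
    {a b e : 𝕂} (hab : a ≠ b) (hae : a ≠ e) (hbe : b ≠ e) {w : V}
    (h : f (f (f w)) - (a + b + e) • f (f w) + (a * b + a * e + b * e) • f w - (a * b * e) • w = 0) :
    w ∈ f.eigenspace a ⊔ f.eigenspace b ⊔ f.eigenspace e := by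
  have h1 : f w - e • w ∈ f.eigenspace a ⊔ f.eigenspace b := by
    refine mem_two f hab (u := f (f w - e • w) - a • (f w - e • w)) (by abel) ?_
    rw [Module.End.mem_eigenspace_iff, ← sub_eq_zero, ← h]
    simp only [map_sub, map_smul]
    module
  obtain ⟨x, hx, y, hy, hxy⟩ := Submodule.mem_sup.1 h1
  rw [Module.End.mem_eigenspace_iff] at hx hy
  have ha := sub_ne_zero.2 hae
  have hb := sub_ne_zero.2 hbe
  refine Submodule.mem_sup.2 ⟨(a - e)⁻¹ • x + (b - e)⁻¹ • y, Submodule.add_mem_sup ?_ ?_,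
    w - ((a - e)⁻¹ • x + (b - e)⁻¹ • y), ?_, by abel⟩
  · exact Submodule.smul_mem _ _ (by rwa [Module.End.mem_eigenspace_iff])
  · exact Submodule.smul_mem _ _ (by rwa [Module.End.mem_eigenspace_iff])
  · have hw : f w = e • w + x + y := by rw [add_assoc, hxy]; abel
    rw [Module.End.mem_eigenspace_iff]
    simp only [map_sub, map_add, map_smul, hx, hy, hw]
    match_scalars <;> (field_simp; try ring)

theorem end_ext {𝕂 V : Type*} [Field 𝕂] [AddCommGroup V] [Module 𝕂 V] {d : ℤ}
    {E : ℤ → Submodule 𝕂 V} (htot : (⨆ i ∈ Finset.Icc (0:ℤ) d, E i) = ⊤) {f g : Module.End 𝕂 V}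
    (h : ∀ i, 0 ≤ i → i ≤ d → ∀ v ∈ E i, f v = g v) : f = g := by
  have : (⊤ : Submodule 𝕂 V) ≤ LinearMap.eqLocus f g := by
    rw [← htot]
    refine iSup₂_le fun i hi v hv => ?_
    rw [Finset.mem_Icc] at hi
    exact h i hi.1 hi.2 v hv
  ext v
  exact this (Submodule.mem_top (x := v))

/-- An index outside `0, …, d` yields a scalar that is not an eigenvalue, because the listed
eigenspaces already span. -/
theorem eigenspace_le {𝕂 V : Type*} [Field 𝕂] [AddCommGroup V] [Module 𝕂 V] {d : ℤ}
    {E : ℤ → Submodule 𝕂 V} (htot : (⨆ i ∈ Finset.Icc (0:ℤ) d, E i) = ⊤) {f : Module.End 𝕂 V}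
    {μ : ℤ → 𝕂} (hμ : Function.Injective μ)
    (h : ∀ i, 0 ≤ i → i ≤ d → E i = f.eigenspace (μ i)) (k : ℤ) :
    f.eigenspace (μ k) ≤ E k := by
  by_cases hk : 0 ≤ k ∧ k ≤ d
  · exact (h k hk.1 hk.2).ge
  · have h1 := (Module.End.eigenspaces_iSupIndep f) (μ k)
    have h2 : (⨆ j, ⨆ (_ : j ≠ μ k), f.eigenspace j) = ⊤ := by
      rw [eq_top_iff, ← htot]
      refine iSup₂_le fun i hi => ?_
      rw [Finset.mem_Icc] at hi
      rw [h i hi.1 hi.2]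
      refine le_iSup₂_of_le (μ i) (fun he => ?_) le_rfl
      rw [hμ he] at hi
      exact hk hi
    rw [h2, disjoint_top] at h1
    rw [h1]
    exact bot_le

theorem flag_mono {𝕂 V : Type*} [Field 𝕂] [AddCommGroup V] [Module 𝕂 V]
    (E : ℤ → Submodule 𝕂 V) {i j : ℤ} (hij : i ≤ j) :
    (⨆ k ∈ Finset.Icc (0:ℤ) i, E k) ≤ ⨆ k ∈ Finset.Icc (0:ℤ) j, E k :=
  biSup_mono fun _ hk => Finset.Icc_subset_Icc_right hij hk

/-- A tridiagonal action raises the flag `E 0 + ⋯ + E i` by at most one step. -/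
theorem flag_raise {𝕂 V : Type*} [Field 𝕂] [AddCommGroup V] [Module 𝕂 V]
    {E : ℤ → Submodule 𝕂 V} {f : Module.End 𝕂 V} (hE : ∀ i, i < 0 → E i = ⊥)
    (h : ∀ i, Submodule.map f (E i) ≤ E (i-1) ⊔ E i ⊔ E (i+1)) {i : ℤ} {v : V}
    (hv : v ∈ ⨆ k ∈ Finset.Icc (0:ℤ) i, E k) :
    f v ∈ ⨆ k ∈ Finset.Icc (0:ℤ) (i + 1), E k := by
  have key : ∀ k, k ≤ i + 1 → E k ≤ ⨆ k ∈ Finset.Icc (0:ℤ) (i + 1), E k := fun k hk => by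
    rcases lt_or_ge k 0 with h0 | h0
    · rw [hE k h0]; exact bot_le
    · exact le_iSup₂_of_le k (Finset.mem_Icc.2 ⟨h0, hk⟩) le_rfl
  have : (⨆ k ∈ Finset.Icc (0:ℤ) i, E k) ≤
      Submodule.comap f (⨆ k ∈ Finset.Icc (0:ℤ) (i + 1), E k) := by
    refine iSup₂_le fun k hk => ?_
    rw [Finset.mem_Icc] at hk
    rw [← Submodule.map_le_iff_le_comap]
    exact (h k).trans (sup_le (sup_le (key _ (by lia)) (key _ (by lia))) (key _ (by lia)))
  exact this hv

/-- Subtracting the top eigenvalue kills the top component of the flag. -/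
theorem flag_lower {𝕂 V : Type*} [Field 𝕂] [AddCommGroup V] [Module 𝕂 V]
    {E : ℤ → Submodule 𝕂 V} {f : Module.End 𝕂 V} {μ : ℤ → 𝕂}
    (h : ∀ i, E i ≤ f.eigenspace (μ i)) {i : ℤ} {v : V}
    (hv : v ∈ ⨆ k ∈ Finset.Icc (0:ℤ) i, E k) :
    f v - μ i • v ∈ ⨆ k ∈ Finset.Icc (0:ℤ) (i - 1), E k := by
  have : (⨆ k ∈ Finset.Icc (0:ℤ) i, E k) ≤
      Submodule.comap (f - μ i • LinearMap.id) (⨆ k ∈ Finset.Icc (0:ℤ) (i - 1), E k) := by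
    refine iSup₂_le fun k hk v hv => ?_
    rw [Finset.mem_Icc] at hk
    have hv' := Module.End.mem_eigenspace_iff.1 (h k hv)
    rw [Submodule.mem_comap]
    simp only [LinearMap.sub_apply, LinearMap.smul_apply, LinearMap.id_apply, hv']
    rcases eq_or_lt_of_le hk.2 with rfl | hlt
    · rw [sub_self]; exact Submodule.zero_mem _
    · rw [← sub_smul]
      exact Submodule.smul_mem _ _
        ((le_iSup₂_of_le (f := fun k (_ : k ∈ Finset.Icc (0:ℤ) (i - 1)) => E k) k
          (Finset.mem_Icc.2 ⟨hk.1, by lia⟩) le_rfl) hv)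
  exact this hv

/-- On an eigenvector of `X` for `x + c x⁻¹`, the left side acts on each component of `A v` by a
polynomial in the two eigenvalues that vanishes for neighbouring (or equal) indices. -/
theorem tridiag_relation {𝕂 V : Type*} [Field 𝕂] [AddCommGroup V] [Module 𝕂 V] {d : ℤ}
    {q c : 𝕂} (hq : q ≠ 0) {A X : Module.End 𝕂 V} {E : ℤ → Submodule 𝕂 V}
    (htot : (⨆ i ∈ Finset.Icc (0:ℤ) d, E i) = ⊤)
    (heig : ∀ i, E i ≤ X.eigenspace (q ^ (2*i - d) + c * q ^ (d - 2*i)))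
    (h : ∀ i, Submodule.map A (E i) ≤ E (i-1) ⊔ E i ⊔ E (i+1)) :
    X * (X * (X * A)) - (q ^ 2 + 1 + (q ^ 2)⁻¹) • (X * (X * (A * X)))
      + (q ^ 2 + 1 + (q ^ 2)⁻¹) • (X * (A * (X * X)))
      - A * (X * (X * X)) + (c * (q ^ 2 - (q ^ 2)⁻¹) ^ 2) • (X * A - A * X) = 0 := by
  refine end_ext htot fun i _ _ v hv => ?_
  obtain ⟨y, hy, w₃, hw₃, hA⟩ := Submodule.mem_sup.1 (h i (Submodule.mem_map_of_mem hv))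
  obtain ⟨w₁, hw₁, w₂, hw₂, rfl⟩ := Submodule.mem_sup.1 hy
  have e₀ := Module.End.mem_eigenspace_iff.1 (heig _ hv)
  have e₁ := Module.End.mem_eigenspace_iff.1 (heig _ hw₁)
  have e₂ := Module.End.mem_eigenspace_iff.1 (heig _ hw₂)
  have e₃ := Module.End.mem_eigenspace_iff.1 (heig _ hw₃)
  have hx : q ^ (2*i - d) ≠ 0 := zpow_ne_zero _ hq
  rw [show q ^ (d - 2*i) = (q ^ (2*i - d))⁻¹ by rw [← zpow_neg]; congr 1; ring] at e₀ e₂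
  rw [show q ^ (2*(i-1) - d) = q ^ (2*i - d) * (q ^ 2)⁻¹ by
      rw [← zpow_natCast, ← zpow_neg, ← zpow_add₀ hq]; congr 1; push_cast; ring,
    show q ^ (d - 2*(i-1)) = (q ^ (2*i - d))⁻¹ * q ^ 2 by
      rw [← zpow_natCast, ← zpow_neg, ← zpow_add₀ hq]; congr 1; push_cast; ring] at e₁
  rw [show q ^ (2*(i+1) - d) = q ^ (2*i - d) * q ^ 2 by
      rw [← zpow_natCast, ← zpow_add₀ hq]; congr 1; push_cast; ring,
    show q ^ (d - 2*(i+1)) = (q ^ (2*i - d))⁻¹ * (q ^ 2)⁻¹ by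
      rw [← zpow_natCast, ← zpow_neg, ← zpow_neg, ← zpow_add₀ hq]; congr 1; push_cast; ring] at e₃
  generalize q ^ (2*i - d) = x at *
  simp only [LinearMap.add_apply, LinearMap.sub_apply, LinearMap.smul_apply, Module.End.mul_apply,
    LinearMap.zero_apply, map_smul, map_add, e₀, e₁, e₂, e₃, ← hA]
  match_scalars <;> (field_simp; try ring)


theorem stmt_6
    {𝕂 : Type*} [Field 𝕂] [IsAlgClosed 𝕂]
    {V : Type*} [AddCommGroup V] [Module 𝕂 V] [FiniteDimensional 𝕂 V]
    (hV : 0 < Module.finrank 𝕂 V)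
    {q : 𝕂} (hq0 : q ≠ 0) (hqru : ∀ n : ℕ, 0 < n → q ^ n ≠ 1)
    {c : 𝕂} (hc : c ≠ 0)
    (A Astar : Module.End 𝕂 V)
    (d : ℤ) (hd : 0 ≤ d)
    (Vs Vst : ℤ → Submodule 𝕂 V)
    (hVout : ∀ i : ℤ, i < 0 ∨ d < i → Vs i = ⊥)
    (hVstout : ∀ i : ℤ, i < 0 ∨ d < i → Vst i = ⊥)
    (hVeig : ∀ i : ℤ, 0 ≤ i → i ≤ d → Vs i = Module.End.eigenspace A (q ^ (2*i - d)))
    (hVne : ∀ i : ℤ, 0 ≤ i → i ≤ d → Vs i ≠ ⊥)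
    (hVtot : (⨆ i ∈ Finset.Icc (0:ℤ) d, Vs i) = ⊤)
    (hVsteig : ∀ i : ℤ, 0 ≤ i → i ≤ d →
      Vst i = Module.End.eigenspace Astar (q ^ (2*i - d) + c * q ^ (d - 2*i)))
    (hVstne : ∀ i : ℤ, 0 ≤ i → i ≤ d → Vst i ≠ ⊥)
    (hVsttot : (⨆ i ∈ Finset.Icc (0:ℤ) d, Vst i) = ⊤)
    (htd1 : ∀ i : ℤ, Submodule.map Astar (Vs i) ≤ Vs (i-1) ⊔ Vs i ⊔ Vs (i+1))
    (htd2 : ∀ i : ℤ, Submodule.map A (Vst i) ≤ Vst (i-1) ⊔ Vst i ⊔ Vst (i+1))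
    (hirr : ∀ W : Submodule 𝕂 V, Submodule.map A W ≤ W → Submodule.map Astar W ≤ W →
      W = ⊥ ∨ W = ⊤)
    (Ws : ℤ → Submodule 𝕂 V)
    (hWout : ∀ i : ℤ, i < 0 ∨ d < i → Ws i = ⊥)
    (hWdef : ∀ i : ℤ, 0 ≤ i → i ≤ d →
      Ws i = (⨆ j ∈ Finset.Icc (0:ℤ) i, Vst j) ⊓ (⨆ j ∈ Finset.Icc (0:ℤ) (d - i), Vs j))
    (hWtot : (⨆ i ∈ Finset.Icc (0:ℤ) d, Ws i) = ⊤)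
    (B : Module.End 𝕂 V)
    (hB : ∀ i : ℤ, 0 ≤ i → i ≤ d → ∀ v ∈ Ws i, B v = q ^ (2*i - d) • v)
    (At : Module.End 𝕂 V)
    (hAt : At = c⁻¹ • (Astar - B))
    (Vt : ℤ → Submodule 𝕂 V)
    (hVtout : ∀ i : ℤ, i < 0 ∨ d < i → Vt i = ⊥)
    (hVtdef : ∀ i : ℤ, 0 ≤ i → i ≤ d → Vt i = Module.End.eigenspace At (q ^ (d - 2*i)))
    (hVttot : (⨆ i ∈ Finset.Icc (0:ℤ) d, Vt i) = ⊤)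
    :
    ∀ i : ℤ, 0 ≤ i → i ≤ d →
      Submodule.map At (Vs i) ≤ Vs (i - 1) ⊔ Vs i ⊔ Vs (i + 1) ∧
      Submodule.map A (Vt i) ≤ Vt (i - 1) ⊔ Vt i ⊔ Vt (i + 1) := by
  have hinj : ∀ m n : ℤ, q ^ m = q ^ n → m = n := by
    have key : ∀ m n : ℤ, m < n → q ^ m ≠ q ^ n := fun m n hmn he => by
      refine hqru (n - m).toNat (by lia) ?_
      rw [← zpow_natCast, Int.toNat_of_nonneg (by lia), zpow_sub₀ hq0, he,
        div_self (zpow_ne_zero _ hq0)]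
    intro m n he
    rcases lt_trichotomy m n with h | h | h
    · exact absurd he (key _ _ h)
    · exact h
    · exact absurd he.symm (key _ _ h)
  have hp : q ^ 2 ≠ 0 := pow_ne_zero _ hq0
  have hVle : ∀ i, Vs i ≤ A.eigenspace (q ^ (2*i - d)) := fun i => by
    by_cases hi : 0 ≤ i ∧ i ≤ d
    · exact (hVeig i hi.1 hi.2).le
    · rw [hVout i (by lia)]; exact bot_le
  have hVstle : ∀ i, Vst i ≤ Astar.eigenspace (q ^ (2*i - d) + c * q ^ (d - 2*i)) := fun i => by
    by_cases hi : 0 ≤ i ∧ i ≤ d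
    · exact (hVsteig i hi.1 hi.2).le
    · rw [hVstout i (by lia)]; exact bot_le
  have hVge := eigenspace_le hVtot (μ := fun i => q ^ (2*i - d))
    (fun a b h => by have := hinj _ _ h; lia) hVeig
  have hVtge := eigenspace_le hVttot (μ := fun i => q ^ (d - 2*i))
    (fun a b h => by have := hinj _ _ h; lia) hVtdef
  have hraise : ∀ i, 0 ≤ i → i ≤ d → ∀ w ∈ Ws i,
      B (A w - q ^ (d - 2*i) • w) = q ^ (2*(i+1) - d) • (A w - q ^ (d - 2*i) • w) := by
    intro i h0 hid w hw
    rw [hWdef i h0 hid] at hw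
    have h1 : A w - q ^ (d - 2*i) • w ∈ ⨆ j ∈ Finset.Icc (0:ℤ) (d - i - 1), Vs j := by
      have := flag_lower hVle hw.2
      rwa [show 2 * (d - i) - d = d - 2 * i by ring] at this
    rcases eq_or_lt_of_le hid with rfl | hlt
    · -- the flag indexed by `-1` is zero
      rw [Finset.Icc_eq_empty (by lia)] at h1
      have h1' : A w - q ^ (i - 2*i) • w = 0 := by simpa using h1
      rw [h1', map_zero, smul_zero]
    · refine hB (i+1) (by lia) (by lia) _ ?_
      rw [hWdef (i+1) (by lia) (by lia), show d - (i+1) = d - i - 1 by ring]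
      exact ⟨Submodule.sub_mem _ (flag_raise (fun j hj => hVstout j (Or.inl hj)) htd2 hw.1)
        (Submodule.smul_mem _ _ (flag_mono Vst (by lia) hw.1)), h1⟩
  have hlower : ∀ i, 0 ≤ i → i ≤ d → ∀ w ∈ Ws i,
      B (Astar w - (q ^ (2*i - d) + c * q ^ (d - 2*i)) • w)
        = q ^ (2*(i-1) - d) • (Astar w - (q ^ (2*i - d) + c * q ^ (d - 2*i)) • w) := by
    intro i h0 hid w hw
    rw [hWdef i h0 hid] at hw
    have h1 := flag_lower hVstle hw.1
    rcases eq_or_lt_of_le h0 with rfl | hlt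
    · rw [Finset.Icc_eq_empty (by lia)] at h1
      have h1' := (Submodule.mem_bot 𝕂).1 (by simpa only [Finset.notMem_empty, iSup_false,
        iSup_bot] using h1)
      rw [h1', map_zero, smul_zero]
    · refine hB (i-1) (by lia) (by lia) _ ?_
      rw [hWdef (i-1) (by lia) (by lia), show d - (i-1) = d - i + 1 by ring]
      exact ⟨h1, Submodule.sub_mem _ (flag_raise (fun j hj => hVout j (Or.inl hj)) htd1 hw.2)
        (Submodule.smul_mem _ _ (flag_mono Vs (by lia) hw.2))⟩
  have hBA : B * A = (q ^ 2) • (A * B) + (1 - q ^ 2) • (1 : Module.End 𝕂 V) := by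
    refine end_ext hWtot fun i h0 hid w hw => ?_
    have h1 := hraise i h0 hid w hw
    have h2 := hB i h0 hid w hw
    rw [show q ^ (d - 2*i) = (q ^ (2*i - d))⁻¹ by rw [← zpow_neg]; congr 1; ring,
      show q ^ (2*(i+1) - d) = q ^ (2*i - d) * q ^ 2 by
        rw [← zpow_natCast, ← zpow_add₀ hq0]; congr 1; push_cast; ring] at h1
    have hx : q ^ (2*i - d) ≠ 0 := zpow_ne_zero _ hq0
    generalize q ^ (2*i - d) = x at *
    rw [map_sub, map_smul, h2, sub_eq_iff_eq_add] at h1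
    simp only [LinearMap.add_apply, LinearMap.smul_apply, Module.End.mul_apply,
      Module.End.one_apply, h1, h2, map_smul]
    match_scalars <;> (field_simp; try ring)
  have hBT : B * At = (q ^ 2)⁻¹ • (At * B) + (1 - (q ^ 2)⁻¹) • (1 : Module.End 𝕂 V) := by
    refine end_ext hWtot fun i h0 hid w hw => ?_
    have h1 := hlower i h0 hid w hw
    have h2 := hB i h0 hid w hw
    rw [show q ^ (d - 2*i) = (q ^ (2*i - d))⁻¹ by rw [← zpow_neg]; congr 1; ring,
      show q ^ (2*(i-1) - d) = q ^ (2*i - d) * (q ^ 2)⁻¹ by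
        rw [← zpow_natCast, ← zpow_neg, ← zpow_add₀ hq0]; congr 1; push_cast; ring] at h1
    have hx : q ^ (2*i - d) ≠ 0 := zpow_ne_zero _ hq0
    generalize q ^ (2*i - d) = x at *
    rw [map_sub, map_smul, h2, sub_eq_iff_eq_add] at h1
    simp only [hAt, LinearMap.add_apply, LinearMap.sub_apply, LinearMap.smul_apply,
      Module.End.mul_apply, Module.End.one_apply, h1, h2, map_smul, map_sub]
    match_scalars <;> (field_simp; try ring)
  have hserre := serre_identity hp c hBA hBT Astar
    (by rw [hAt, smul_smul, mul_inv_cancel₀ hc, one_smul]; abel)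
  rw [tridiag_relation hq0 hVsttot hVstle htd2] at hserre
  have hserre' := (smul_eq_zero.1 hserre.symm).resolve_left (pow_ne_zero 3 hc)
  intro i h0 hid
  constructor
  · rintro _ ⟨v, hv, rfl⟩
    have hAv := Module.End.mem_eigenspace_iff.1 (hVle i hv)
    have hBv : B v ∈ Vs (i-1) ⊔ Vs i := by
      have h1 := LinearMap.congr_fun hBA v
      simp only [LinearMap.add_apply, LinearMap.smul_apply, Module.End.mul_apply,
        Module.End.one_apply, hAv, map_smul] at h1
      refine sup_le_sup (hVge (i-1)) (hVge i) (mem_two A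
        (u := (-((q ^ 2)⁻¹ * (1 - q ^ 2))) • v) (fun h => ?_) ?_
        (Submodule.smul_mem _ _ (hVle i hv)))
      · have := hinj _ _ h; lia
      · rw [show q ^ (2*(i-1) - d) = q ^ (2*i - d) * (q ^ 2)⁻¹ by
          rw [← zpow_natCast, ← zpow_neg, ← zpow_add₀ hq0]; congr 1; push_cast; ring,
          mul_comm, mul_smul, h1]
        match_scalars <;> (field_simp; try ring)
    rw [hAt, LinearMap.smul_apply, LinearMap.sub_apply]
    exact Submodule.smul_mem _ _ (Submodule.sub_mem _ (htd1 i (Submodule.mem_map_of_mem hv))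
      (le_sup_left (a := Vs (i-1) ⊔ Vs i) hBv))
  · rintro _ ⟨v, hv, rfl⟩
    have hTv := Module.End.mem_eigenspace_iff.1 ((hVtdef i h0 hid).le hv)
    have h1 := LinearMap.congr_fun hserre' v
    simp only [LinearMap.add_apply, LinearMap.sub_apply, LinearMap.smul_apply,
      Module.End.mul_apply, LinearMap.zero_apply, hTv, map_smul] at h1
    refine sup_le_sup (sup_le_sup (hVtge (i-1)) (hVtge i)) (hVtge (i+1)) (mem_three At
      (fun h => ?_) (fun h => ?_) (fun h => ?_) ?_)
    · have := hinj _ _ h; lia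
    · have := hinj _ _ h; lia
    · have := hinj _ _ h; lia
    · rw [← h1, show q ^ (d - 2*(i-1)) = q ^ (d - 2*i) * q ^ 2 by
          rw [← zpow_natCast, ← zpow_add₀ hq0]; congr 1; push_cast; ring,
        show q ^ (d - 2*(i+1)) = q ^ (d - 2*i) * (q ^ 2)⁻¹ by
          rw [← zpow_natCast, ← zpow_neg, ← zpow_add₀ hq0]; congr 1; push_cast; ring]
      match_scalars <;> (field_simp; try ring)
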